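/- Let p be a prime and let H be a nonabelian finite group acting faithfully on a faithful irreducible module V over a field of characteristic p, and let k be a subfield of the complex numbers containing the primitive pth roots of unity. If G = V ⋊ H, then acd_k(G) ≥ 2. -/

import Mathlib

open scoped BigOperators

/-- The set of irreducible complex characters of `G`, viewed as functions `G → ℂ`. -/
def Irr (G : Type) [Monoid G] : Set (G → ℂ) :=
  {f | ∃ V : FDRep ℂ G, CategoryTheory.Simple V ∧ f = V.character}

/-- The degree of a character, i.e. its value at the identity (a natural number). -/
noncomputable def charDeg {G : Type} [One G] (f : G → ℂ) : ℕ := ⌊(f 1).re⌋₊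

/-- The average of the degrees of the characters in a set `S` of characters. -/
noncomputable def acd {G : Type} [One G] (S : Set (G → ℂ)) : ℝ :=
  (∑ᶠ f ∈ S, (f 1).re) / (S.ncard : ℝ)

/-- `G` has a normal `p`-complement: a normal subgroup of order coprime to `p`
whose index is a power of `p`. -/
def HasNormalPComplement (p : ℕ) (G : Type) [Group G] : Prop :=
  ∃ N : Subgroup G, N.Normal ∧ Nat.Coprime (Nat.card N) p ∧ ∃ n : ℕ, N.index = p ^ n

/-!
A linear character `l` of `V` with values in `k` can be chosen so that its stabilizer `T` in `H`
does not contain `H'`. Each `ψ : T → kˣ` makes `l * ψ` a linear character of `V ⋊ T`, and inducing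
it to `G = V ⋊ H` gives an irreducible `k`-valued character of degree `|H : T|`; different `ψ` give
different characters. As `[V, H] = V`, the linear `k`-valued characters of `G` come from `H`, and at
most `|H : TH'|` of those restrict to a given `ψ`. Subgroups of index at most two contain `H'`, so
`|H : T| ≥ |H : TH'| + 2`: the excess over `2` of the degree of each induced character makes up for
the linear characters that lie over the same `ψ`.
-/

section InducedRepresentation

variable {H V F : Type*} [Group H]

/-- The stabilizer in `H` of a homomorphism `l` on `V` under the action of `H` through `φ`; it is
the inertia group of `l` in `H` when `l` is a linear character of `V`. -/
def characterStabilizer {M : Type*} [Group V] [MulOneClass M] (φ : H →* MulAut V) (l : V →* M) :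
    Subgroup H where
  carrier := {h | ∀ v, l (φ h v) = l v}
  one_mem' v := by rw [map_one, MulAut.one_apply]
  mul_mem' {a b} ha hb v := by rw [map_mul, MulAut.mul_apply, ha, hb]
  inv_mem' {a} ha v := by
    rw [← ha (φ a⁻¹ v), ← MulAut.mul_apply, ← map_mul, mul_inv_cancel, map_one, MulAut.one_apply]

lemma apply_of_mem_characterStabilizer {M : Type*} [Group V] [MulOneClass M] {φ : H →* MulAut V}
    {l : V →* M} {h : H} (hh : h ∈ characterStabilizer φ l) (v : V) : l (φ h v) = l v :=
  hh v

/-- The functions on `H` that transform by the linear character `ψ` under left translation by `T`.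
With `H` acting by right translation this is the representation of `H` induced from `ψ`. -/
def equivariantFunctions [CommSemiring F] (T : Subgroup H) (ψ : T →* Fˣ) : Submodule F (H → F) where
  carrier := {f | ∀ (t : T) x, f (t * x) = ψ t * f x}
  add_mem' {a b} ha hb t x := by simp only [Pi.add_apply, ha t x, hb t x, mul_add]
  zero_mem' t x := by simp only [Pi.zero_apply, mul_zero]
  smul_mem' c a ha t x := by simp only [Pi.smul_apply, smul_eq_mul, ha t x, mul_left_comm]

open Classical in
/-- The extension of a linear character of a subgroup `T` by zero to the whole group, as a vector of
the induced representation. -/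
noncomputable def extendByZero [CommSemiring F] {T : Subgroup H} (ψ : T →* Fˣ) :
    equivariantFunctions T ψ where
  val x := if hx : x ∈ T then ψ ⟨x, hx⟩ else 0
  property t x := by
    beta_reduce
    by_cases hx : x ∈ T
    · have htx : (t * ⟨x, hx⟩ : T) = ⟨t * x, T.mul_mem t.2 hx⟩ := rfl
      rw [dif_pos hx, dif_pos (T.mul_mem t.2 hx), ← htx, map_mul, Units.val_mul]
    · rw [dif_neg hx, dif_neg (mt (T.mul_mem_cancel_left t.2).1 hx), mul_zero]

section extendByZero

variable [CommSemiring F] {T : Subgroup H} (ψ : T →* Fˣ)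

lemma extendByZero_of_mem {x : H} (hx : x ∈ T) : (extendByZero ψ).1 x = ψ ⟨x, hx⟩ :=
  dif_pos hx

lemma extendByZero_of_notMem {x : H} (hx : x ∉ T) : (extendByZero ψ).1 x = 0 :=
  dif_neg hx

lemma extendByZero_one : (extendByZero ψ).1 1 = 1 := by
  rw [extendByZero_of_mem ψ T.one_mem]
  exact congrArg Units.val (map_one ψ)

variable {ψ}

lemma apply_eq_extendByZero_mul_apply_one (f : equivariantFunctions T ψ) {x : H} (hx : x ∈ T) :
    f.1 x = (extendByZero ψ).1 x * f.1 1 := by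
  rw [extendByZero_of_mem ψ hx, ← f.2 ⟨x, hx⟩ 1, mul_one]

lemma card_mul_apply_eq_sum_mul_extendByZero [Fintype H] (f : equivariantFunctions T ψ) (x : H) :
    (Nat.card T : F) * f.1 x = ∑ h, f.1 h * (extendByZero ψ).1 (x * h⁻¹) := by
  classical
  have summand (y : H) : f.1 (y⁻¹ * x) * (extendByZero ψ).1 y = if y ∈ T then f.1 x else 0 := by
    split_ifs with hy
    · rw [extendByZero_of_mem ψ hy, mul_comm, ← f.2 ⟨y, hy⟩, mul_inv_cancel_left]
    · rw [extendByZero_of_notMem ψ hy, mul_zero]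
  calc (Nat.card T : F) * f.1 x = ∑ y, if y ∈ T then f.1 x else 0 := by
        rw [← Finset.sum_filter, Finset.sum_const, nsmul_eq_mul, Nat.card_eq_fintype_card,
          Fintype.card_subtype]
    _ = ∑ y, f.1 (y⁻¹ * x) * (extendByZero ψ).1 y :=
        Finset.sum_congr rfl fun y _ => (summand y).symm
    _ = ∑ h, f.1 h * (extendByZero ψ).1 (x * h⁻¹) :=
        Fintype.sum_equiv ((Equiv.inv H).trans (Equiv.mulRight x)) _ _ fun y => by simp

end extendByZero

variable [Group V] (φ : H →* MulAut V)

/-- The representation of `V ⋊ H` induced from the linear character `v * t ↦ l v * ψ t` of `V ⋊ T`,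
where `T` is the stabilizer of `l`. Its vectors are the functions on `V ⋊ H` that transform by this
character under left translation by `V ⋊ T`; each is encoded by its restriction to `H`, which
determines it. -/
noncomputable def inducedRep [CommSemiring F] (l : V →* Fˣ) (ψ : characterStabilizer φ l →* Fˣ) :
    Representation F (V ⋊[φ] H) (equivariantFunctions (characterStabilizer φ l) ψ) where
  toFun g :=
    { toFun := fun f => ⟨fun x => l (φ x g.left) * f.1 (x * g.right), fun t x => by
        beta_reduce
        rw [map_mul, MulAut.mul_apply, apply_of_mem_characterStabilizer t.2, mul_assoc, f.2 t,
          mul_left_comm]⟩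
      map_add' := fun f f' => by ext x; exact mul_add _ _ _
      map_smul' := fun c f => by ext x; exact mul_left_comm _ _ _ }
  map_one' := by ext f x; simp
  map_mul' g g' := by ext f x; simp [mul_assoc]

section inducedRep

variable {φ}

lemma inducedRep_apply [CommSemiring F] {l : V →* Fˣ} {ψ : characterStabilizer φ l →* Fˣ}
    (g : V ⋊[φ] H) (f : equivariantFunctions (characterStabilizer φ l) ψ) (x : H) :
    (inducedRep φ l ψ g f).1 x = l (φ x g.left) * f.1 (x * g.right) :=
  rfl

lemma sum_inv_mul_apply_eq_ite [CommRing F] [IsDomain F] [Fintype V] (l : V →* Fˣ) (x : H)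
    [Decidable (x ∈ characterStabilizer φ l)] :
    ∑ v, ((l v)⁻¹ : Fˣ) * (l (φ x v) : F) =
      if x ∈ characterStabilizer φ l then (Nat.card V : F) else 0 := by
  classical
  let twist : V →* F := (Units.coeHom F).comp (l⁻¹ * l.comp (φ x).toMonoidHom)
  have twist_eq_one_iff : twist = 1 ↔ x ∈ characterStabilizer φ l := by
    simp only [twist, DFunLike.ext_iff, MonoidHom.comp_apply, MonoidHom.one_apply,
      Units.coeHom_apply, Units.val_eq_one, MonoidHom.mul_apply, MonoidHom.inv_apply,
      inv_mul_eq_one]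
    exact forall_congr' fun v => eq_comm
  have := sum_hom_units twist
  simp only [twist_eq_one_iff, Nat.cast_ite, Nat.cast_zero, ← Nat.card_eq_fintype_card] at this
  exact this

-- Up to a scalar, the left-hand side is the projection of `f` to the `l`-eigenspace of `V`. That
-- this eigenspace is the line through `extendByZero ψ` yields irreducibility, and shows that the
-- character determines `ψ`.
lemma sum_inv_smul_inducedRep_inl [CommRing F] [IsDomain F] [Fintype V] {l : V →* Fˣ}
    {ψ : characterStabilizer φ l →* Fˣ}
    (f : equivariantFunctions (characterStabilizer φ l) ψ) :
    ∑ v, (((l v)⁻¹ : Fˣ) : F) • inducedRep φ l ψ (SemidirectProduct.inl v) f =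
      (Nat.card V * f.1 1) • extendByZero ψ := by
  classical
  ext x
  have apply_eq : (∑ v, (((l v)⁻¹ : Fˣ) : F) • inducedRep φ l ψ (SemidirectProduct.inl v) f).1 x =
      (∑ v, ((l v)⁻¹ : Fˣ) * (l (φ x v) : F)) * f.1 x := by
    simp [inducedRep_apply, Finset.sum_mul, mul_assoc]
  rw [apply_eq, sum_inv_mul_apply_eq_ite, Submodule.coe_smul, Pi.smul_apply, smul_eq_mul]
  split_ifs with hx
  · rw [apply_eq_extendByZero_mul_apply_one f hx]
    ring
  · rw [extendByZero_of_notMem ψ hx, zero_mul, mul_zero]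

lemma card_smul_eq_sum_smul_inducedRep_inr [CommSemiring F] [Fintype H] {l : V →* Fˣ}
    {ψ : characterStabilizer φ l →* Fˣ}
    (f : equivariantFunctions (characterStabilizer φ l) ψ) :
    (Nat.card (characterStabilizer φ l) : F) • f =
      ∑ h, f.1 h • inducedRep φ l ψ (SemidirectProduct.inr h⁻¹) (extendByZero ψ) := by
  ext x
  have := card_mul_apply_eq_sum_mul_extendByZero f x
  simpa [inducedRep_apply] using this

lemma sum_inv_mul_character_inducedRep [Field F] [Finite H] [Fintype V] {l : V →* Fˣ}
    (ψ : characterStabilizer φ l →* Fˣ) (t : characterStabilizer φ l) :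
    ∑ v, ((l v)⁻¹ : Fˣ) * (inducedRep φ l ψ).character ⟨v, t⟩ = Nat.card V * ψ t := by
  let evalOne : equivariantFunctions (characterStabilizer φ l) ψ →ₗ[F] F :=
    LinearMap.proj 1 ∘ₗ Submodule.subtype _
  have rankOne : ∑ v, (((l v)⁻¹ : Fˣ) : F) • inducedRep φ l ψ ⟨v, t⟩ =
      (evalOne ∘ₗ inducedRep φ l ψ (SemidirectProduct.inr t)).smulRight
        ((Nat.card V : F) • extendByZero ψ) := by
    ext1 f
    have := sum_inv_smul_inducedRep_inl (inducedRep φ l ψ (SemidirectProduct.inr t) f)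
    simpa only [LinearMap.sum_apply, LinearMap.smul_apply, ← Module.End.mul_apply, ← map_mul,
      ← SemidirectProduct.mk_eq_inl_mul_inr, LinearMap.smulRight_apply, smul_smul, mul_comm]
      using! this
  have := congrArg (LinearMap.trace F _) rankOne
  rw [LinearMap.trace_smulRight] at this
  simpa [Representation.character, evalOne, inducedRep_apply, extendByZero_of_mem ψ t.2] using this

lemma character_inducedRep_injective [Field F] [Finite H] [Finite V] [NeZero (Nat.card V : F)]
    (l : V →* Fˣ) : Function.Injective fun ψ => (inducedRep φ l ψ).character := by
  intro ψ ψ' h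
  have := Fintype.ofFinite V
  ext t
  refine mul_left_cancel₀ (NeZero.ne (Nat.card V : F)) ?_
  rw [← sum_inv_mul_character_inducedRep ψ t, ← sum_inv_mul_character_inducedRep ψ' t]
  exact Finset.sum_congr rfl fun v _ => congrArg _ (congrFun h _)

lemma character_inducedRep [Field F] [Fintype H] {l : V →* Fˣ}
    [NeZero (Nat.card (characterStabilizer φ l) : F)] (ψ : characterStabilizer φ l →* Fˣ)
    (g : V ⋊[φ] H) :
    (inducedRep φ l ψ).character g = (Nat.card (characterStabilizer φ l) : F)⁻¹ *
      ∑ x, l (φ x g.left) * (extendByZero ψ).1 (x * g.right * x⁻¹) := by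
  let evalAt (x : H) : equivariantFunctions (characterStabilizer φ l) ψ →ₗ[F] F :=
    LinearMap.proj x ∘ₗ Submodule.subtype _
  have sumRankOne : (Nat.card (characterStabilizer φ l) : F) • inducedRep φ l ψ g =
      ∑ x, (evalAt x).smulRight
        (inducedRep φ l ψ (g * SemidirectProduct.inr x⁻¹) (extendByZero ψ)) := by
    ext1 f
    rw [LinearMap.smul_apply, ← map_smul, card_smul_eq_sum_smul_inducedRep_inr, map_sum,
      LinearMap.sum_apply]
    simp only [map_smul, map_mul, Module.End.mul_apply]
    rfl
  have := congrArg (LinearMap.trace F _) sumRankOne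
  rw [eq_inv_mul_iff_mul_eq₀ (NeZero.ne _)]
  simpa [LinearMap.trace_smulRight, Representation.character, evalAt, inducedRep_apply,
    mul_assoc] using this

lemma character_inducedRep_one [Field F] [Finite H] {l : V →* Fˣ}
    [NeZero (Nat.card (characterStabilizer φ l) : F)] (ψ : characterStabilizer φ l →* Fˣ) :
    (inducedRep φ l ψ).character 1 = (characterStabilizer φ l).index := by
  have := Fintype.ofFinite H
  rw [character_inducedRep, inv_mul_eq_iff_eq_mul₀ (NeZero.ne _), ← Nat.cast_mul,
    Subgroup.card_mul_index]
  simp [extendByZero_one]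

lemma extendByZero_mem_of_ne_bot [Field F] [Finite V] [NeZero (Nat.card V : F)] {l : V →* Fˣ}
    {ψ : characterStabilizer φ l →* Fˣ} {W : Subrepresentation (inducedRep φ l ψ)}
    (hW : W.toSubmodule ≠ ⊥) : extendByZero ψ ∈ W.toSubmodule := by
  have := Fintype.ofFinite V
  obtain ⟨f, hfW, hf⟩ := Submodule.exists_mem_ne_zero_of_ne_bot hW
  obtain ⟨x, hx⟩ : ∃ x, f.1 x ≠ 0 := Function.ne_iff.1 (Subtype.coe_ne_coe.2 hf)
  let f' := inducedRep φ l ψ (SemidirectProduct.inr x) f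
  have hf'W : f' ∈ W.toSubmodule := W.apply_mem_toSubmodule _ hfW
  have hf' : f'.1 1 ≠ 0 := by simpa [f', inducedRep_apply] using hx
  rw [← W.toSubmodule.smul_mem_iff (mul_ne_zero (NeZero.ne (Nat.card V : F)) hf'),
    ← sum_inv_smul_inducedRep_inl]
  exact Submodule.sum_mem _ fun v _ => Submodule.smul_mem _ _ (W.apply_mem_toSubmodule _ hf'W)

lemma toSubmodule_eq_top_of_extendByZero_mem [Field F] [Finite H] {l : V →* Fˣ}
    [NeZero (Nat.card (characterStabilizer φ l) : F)] {ψ : characterStabilizer φ l →* Fˣ}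
    {W : Subrepresentation (inducedRep φ l ψ)} (hW : extendByZero ψ ∈ W.toSubmodule) :
    W.toSubmodule = ⊤ := by
  have := Fintype.ofFinite H
  refine Submodule.eq_top_iff'.2 fun f => ?_
  rw [← W.toSubmodule.smul_mem_iff (NeZero.ne (Nat.card (characterStabilizer φ l) : F)),
    card_smul_eq_sum_smul_inducedRep_inr]
  exact Submodule.sum_mem _ fun h _ => Submodule.smul_mem _ _ (W.apply_mem_toSubmodule _ hW)

lemma inducedRep_isIrreducible [Field F] [Finite H] [Finite V] [NeZero (Nat.card V : F)]
    (l : V →* Fˣ) [NeZero (Nat.card (characterStabilizer φ l) : F)]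
    (ψ : characterStabilizer φ l →* Fˣ) : (inducedRep φ l ψ).IsIrreducible where
  exists_pair_ne := by
    refine ⟨⊥, ⊤, fun h => ?_⟩
    have hmem : extendByZero ψ ∈ (⊥ : Subrepresentation (inducedRep φ l ψ)) := h ▸ trivial
    have hzero : extendByZero ψ = 0 := hmem
    exact one_ne_zero ((extendByZero_one ψ).symm.trans (by rw [hzero]; rfl))
  eq_bot_or_eq_top W := by
    refine or_iff_not_imp_left.2 fun hW => Subrepresentation.toSubmodule_injective ?_
    exact toSubmodule_eq_top_of_extendByZero_mem
      (extendByZero_mem_of_ne_bot fun h => hW (Subrepresentation.toSubmodule_injective h))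

end inducedRep

end InducedRepresentation

section ComplexCharacters

variable {G : Type} [Group G]

lemma character_mem_Irr [Finite G] {X : Type} [AddCommGroup X] [Module ℂ X]
    [FiniteDimensional ℂ X] (ρ : Representation ℂ G X) [ρ.IsIrreducible] :
    ρ.character ∈ Irr G := by
  have := Fintype.ofFinite G
  have := invertibleOfNonzero (NeZero.ne (Nat.card G : ℂ))
  refine ⟨FDRep.of ρ, ?_, rfl⟩
  have norm_eq_one := Representation.char_orthonormal ρ ρ
  rw [if_pos ⟨Representation.Equiv.refl ρ⟩, inv_mul_eq_one₀ (NeZero.ne _)] at norm_eq_one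
  rw [FDRep.simple_iff_char_is_norm_one]
  exact norm_eq_one.symm

lemma linearIndependent_Irr [Finite G] :
    LinearIndependent ℂ (Subtype.val : Irr G → G → ℂ) := by
  have := Fintype.ofFinite G
  have := invertibleOfNonzero (NeZero.ne (Nat.card G : ℂ))
  let pairing := (dotProductBilin ℂ ℂ).compl₂ (LinearMap.funLeft ℂ ℂ (Inv.inv : G → G))
  refine LinearMap.linearIndependent_of_isOrthoᵢ (B := pairing) ?_ ?_
  · rintro ⟨_, X, _, rfl⟩ ⟨_, Y, _, rfl⟩ hne
    have orthogonal := FDRep.char_orthonormal X Y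
    rw [if_neg fun ⟨i⟩ => hne (Subtype.ext (FDRep.char_iso i)),
      mul_eq_zero_iff_left (inv_ne_zero (NeZero.ne _))] at orthogonal
    exact orthogonal
  · rintro ⟨_, X, _, rfl⟩ hzero
    have normalized := FDRep.char_orthonormal X X
    rw [if_pos ⟨CategoryTheory.Iso.refl X⟩] at normalized
    refine one_ne_zero (normalized.symm.trans ?_)
    exact (congrArg _ hzero).trans (mul_zero _)

lemma finite_Irr [Finite G] : (Irr G).Finite :=
  linearIndependent_Irr.finite

lemma apply_one_eq_one_or_two_le {f : G → ℂ} (hf : f ∈ Irr G) : f 1 = 1 ∨ 2 ≤ (f 1).re := by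
  obtain ⟨X, hX, rfl⟩ := hf
  have finrank_ne_zero : Module.finrank ℂ X ≠ 0 := fun h => by
    have : Subsingleton X := Module.finrank_zero_iff.1 h
    exact CategoryTheory.id_nonzero X (by ext x; exact Subsingleton.elim (α := X) _ _)
  rw [X.char_one, Complex.natCast_re, Nat.cast_eq_one, Nat.ofNat_le_cast]
  omega

lemma map_mul_of_apply_one_eq_one {f : G → ℂ} (hf : f ∈ Irr G) (hf1 : f 1 = 1) (a b : G) :
    f (a * b) = f a * f b := by
  obtain ⟨X, -, rfl⟩ := hf
  have finrank_eq_one : Module.finrank ℂ X = 1 := by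
    rwa [X.char_one, Nat.cast_eq_one] at hf1
  have scalar (g : G) : X.ρ g = X.character g • LinearMap.id := by
    obtain ⟨c, hc, -⟩ := LinearMap.existsUnique_eq_smul_id_of_finrank_eq_one finrank_eq_one (X.ρ g)
    have : X.character g = c := by simp [FDRep.character, hc, finrank_eq_one]
    rw [this, hc]
  change LinearMap.trace ℂ X (X.ρ (a * b)) = _
  rw [map_mul, scalar a, scalar b, smul_mul_smul_comm, Module.End.mul_eq_comp, LinearMap.comp_id,
    map_smul, LinearMap.trace_id, finrank_eq_one, Nat.cast_one, smul_eq_mul, mul_one]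

lemma exists_monoidHom_of_apply_one_eq_one {k : Subfield ℂ} {f : G → ℂ} (hf : f ∈ Irr G)
    (hf1 : f 1 = 1) (hfk : ∀ g, f g ∈ k) : ∃ μ : G →* kˣ, ∀ g, f g = (μ g : k) := by
  let f' : G →* k :=
    { toFun := fun g => ⟨f g, hfk g⟩
      map_one' := Subtype.ext hf1
      map_mul' := fun a b => Subtype.ext (map_mul_of_apply_one_eq_one hf hf1 a b) }
  exact ⟨f'.toHomUnits, fun g => rfl⟩

end ComplexCharacters

lemma two_le_acd {G : Type} [One G] {S I : Set (G → ℂ)} {m : ℕ} (hS : S.Finite)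
    (hSne : S.Nonempty) (hdeg : ∀ f ∈ S, f 1 = 1 ∨ 2 ≤ (f 1).re) (hIS : I ⊆ S)
    (hI : ∀ f ∈ I, (m + 2 : ℝ) ≤ (f 1).re)
    (hlinear : {f ∈ S | f 1 = 1}.ncard ≤ m * I.ncard) : 2 ≤ acd S := by
  classical
  lift S to Finset (G → ℂ) using hS
  lift I to Finset (G → ℂ) using S.finite_toSet.subset hIS
  simp only [Finset.mem_coe, Finset.coe_subset, Finset.coe_nonempty] at hSne hdeg hIS hI
  have card_linear : ({f ∈ S | f 1 = 1}.card : ℝ) ≤ m * I.card := by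
    rw [← Set.ncard_coe_finset, ← Set.ncard_coe_finset, Finset.coe_filter]
    exact_mod_cast hlinear
  have excess (f) (hf : f ∈ S) :
      m * (if f ∈ I then 1 else 0) - (if f 1 = 1 then 1 else 0) ≤ (f 1).re - 2 := by
    by_cases hfI : f ∈ I
    · have large := hI f hfI
      have not_linear : f 1 ≠ 1 := fun h => by
        rw [h, Complex.one_re] at large
        linarith [m.cast_nonneg (α := ℝ)]
      rw [if_pos hfI, if_neg not_linear]
      linarith
    · rw [if_neg hfI]
      rcases hdeg f hf with h | h
      · rw [if_pos h, h, Complex.one_re]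
        norm_num
      · split_ifs <;> linarith
  have sum_excess := Finset.sum_le_sum excess
  rw [Finset.sum_sub_distrib, Finset.sum_sub_distrib, ← Finset.mul_sum, Finset.sum_boole,
    Finset.sum_boole, Finset.sum_const, nsmul_eq_mul, Finset.filter_mem_eq_inter,
    Finset.inter_eq_right.2 hIS] at sum_excess
  have card_pos : (0 : ℝ) < S.card := Nat.cast_pos.2 hSne.card_pos
  rw [acd, finsum_mem_coe_finset, Set.ncard_coe_finset, le_div_iff₀ card_pos]
  linarith

section LinearCharacters

variable {H : Type*} [Group H]

lemma card_monoidHom_units_le_card (G R : Type*) [Monoid G] [Finite G] [CommRing R] [IsDomain R] :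
    Nat.card (G →* Rˣ) ≤ Nat.card G := by
  have := Fintype.ofFinite G
  have coe_injective : Function.Injective fun μ : G →* Rˣ => (Units.coeHom R).comp μ :=
    fun μ ν h => MonoidHom.ext fun g => Units.ext (DFunLike.congr_fun h g)
  have linearIndependent := (linearIndependent_monoidHom G R).comp _ coe_injective
  have := linearIndependent.finite
  have := Fintype.ofFinite (G →* Rˣ)
  have := linearIndependent.fintype_card_le_finrank
  simpa only [Module.finrank_fintype_fun_eq_card, Nat.card_eq_fintype_card] using this

lemma card_monoidHom_units_le_index_mul (R : Type*) [Finite H] [CommRing R] [IsDomain R]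
    (T : Subgroup H) :
    Nat.card (H →* Rˣ) ≤ (T ⊔ commutator H).index * Nat.card (T →* Rˣ) := by
  have : (T ⊔ commutator H).Normal := Subgroup.Normal.of_commutator_le _ le_sup_right
  let restrict : (H →* Rˣ) →* (T →* Rˣ) := MonoidHom.compHom' T.subtype
  have le_ker (μ : restrict.ker) : T ⊔ commutator H ≤ μ.1.ker :=
    sup_le (fun t ht => DFunLike.congr_fun (MonoidHom.mem_ker.1 μ.2) (⟨t, ht⟩ : T))
      (Abelianization.commutator_subset_ker _)
  have lift_injective : Function.Injective fun μ : restrict.ker =>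
      QuotientGroup.lift (T ⊔ commutator H) μ.1 (le_ker μ) := fun μ ν h =>
    Subtype.ext (MonoidHom.ext fun x => DFunLike.congr_fun h (x : H ⧸ (T ⊔ commutator H)))
  calc Nat.card (H →* Rˣ) = Nat.card restrict.ker * Nat.card restrict.range := by
        rw [← Subgroup.index_ker, Subgroup.card_mul_index]
    _ ≤ Nat.card (H ⧸ (T ⊔ commutator H) →* Rˣ) * Nat.card (T →* Rˣ) :=
        Nat.mul_le_mul (Nat.card_le_card_of_injective _ lift_injective)
          (Subgroup.card_le_card_group _)
    _ ≤ (T ⊔ commutator H).index * Nat.card (T →* Rˣ) := by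
        gcongr
        exact card_monoidHom_units_le_card _ R

lemma index_sup_commutator_add_two_le {T : Subgroup H} [T.FiniteIndex]
    (hT : ¬ commutator H ≤ T) : (T ⊔ commutator H).index + 2 ≤ T.index := by
  have relIndex_mul_index := Subgroup.relIndex_mul_index (le_sup_left : T ≤ T ⊔ commutator H)
  have index_ne_zero : T.index ≠ 0 := Subgroup.FiniteIndex.index_ne_zero
  have index_ne_two : T.index ≠ 2 := fun h => hT <| by
    rw [commutator_def, Subgroup.commutator_le]
    intro a _ b _
    simp only [commutatorElement_def, Subgroup.mul_mem_iff_of_index_two h, inv_mem_iff]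
    tauto
  have relIndex_ne_one : T.relIndex (T ⊔ commutator H) ≠ 1 := fun h =>
    hT (le_sup_right.trans (Subgroup.relIndex_eq_one.1 h))
  generalize T.relIndex (T ⊔ commutator H) = r, (T ⊔ commutator H).index = m at *
  have r_pos : r ≠ 0 := by rintro rfl; omega
  have m_pos : m ≠ 0 := by rintro rfl; omega
  obtain rfl | hm : m = 1 ∨ 2 ≤ m := by omega
  · omega
  · have : 2 * m ≤ r * m := Nat.mul_le_mul_right m (by omega)
    omega

end LinearCharacters

section ActionCommutator

variable {H V : Type*} [Group H] [Group V]

/-- The subgroup `[V, H]` of `V` generated by the elements `φ h v * v⁻¹`. -/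
def actionCommutator (φ : H →* MulAut V) : Subgroup V :=
  Subgroup.closure {w | ∃ h v, φ h v * v⁻¹ = w}

lemma mul_inv_mem_actionCommutator (φ : H →* MulAut V) (h : H) (v : V) :
    φ h v * v⁻¹ ∈ actionCommutator φ :=
  Subgroup.subset_closure ⟨h, v, rfl⟩

lemma apply_mem_actionCommutator (φ : H →* MulAut V) (h : H) {w : V}
    (hw : w ∈ actionCommutator φ) : φ h w ∈ actionCommutator φ := by
  have := Subgroup.mul_mem _ (mul_inv_mem_actionCommutator φ h w) hw
  rwa [inv_mul_cancel_right] at this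

lemma actionCommutator_eq_top_of_irreducible {φ : H →* MulAut V} (hφ : φ ≠ 1)
    (hirr : ∀ W : Subgroup V, (∀ h : H, ∀ w ∈ W, φ h w ∈ W) → W = ⊥ ∨ W = ⊤) :
    actionCommutator φ = ⊤ := by
  refine (hirr _ fun h _ => apply_mem_actionCommutator φ h).resolve_left fun hbot => hφ ?_
  ext h v
  have := mul_inv_mem_actionCommutator φ h v
  rw [hbot, Subgroup.mem_bot, mul_inv_eq_one] at this
  exact this

lemma monoidHom_inl_eq_one {φ : H →* MulAut V} (hφ : actionCommutator φ = ⊤)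
    {A : Type*} [CommGroup A] (μ : V ⋊[φ] H →* A) (v : V) : μ (SemidirectProduct.inl v) = 1 := by
  have le_ker : actionCommutator φ ≤ (μ.comp SemidirectProduct.inl).ker := by
    refine (Subgroup.closure_le _).2 ?_
    rintro _ ⟨h, v, rfl⟩
    simp [MonoidHom.mem_ker, SemidirectProduct.inl_aut, mul_right_comm _ (μ _) _]
  exact le_ker (hφ ▸ Subgroup.mem_top v)

end ActionCommutator

lemma not_commutator_le_ker {H M : Type*} [Group H] [Group M]
    (hnab : ∃ x y : H, x * y ≠ y * x) {φ : H →* M} (hφ : Function.Injective φ) :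
    ¬ commutator H ≤ φ.ker := by
  obtain ⟨x, y, hxy⟩ := hnab
  rw [(MonoidHom.ker_eq_bot_iff φ).2 hφ, le_bot_iff, commutator_eq_bot_iff]
  exact fun _ => hxy (mul_comm' x y)

lemma hasEnoughRootsOfUnity_exponent {V : Type*} [Monoid V] {n : ℕ} [NeZero n]
    (hV : ∀ v : V, v ^ n = 1) (k : Subfield ℂ) (hk : ∀ ζ : ℂ, IsPrimitiveRoot ζ n → ζ ∈ k) :
    HasEnoughRootsOfUnity k (Monoid.exponent V) := by
  have exp_primitive := Complex.isPrimitiveRoot_exp n (NeZero.ne n)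
  have : HasEnoughRootsOfUnity k n :=
    { prim := ⟨⟨_, hk _ exp_primitive⟩,
        IsPrimitiveRoot.of_map_of_injective (f := k.subtype) exp_primitive k.subtype.injective⟩
      cyc := inferInstance }
  exact .of_dvd k (Monoid.exponent_dvd_of_forall_pow_eq_one hV)

lemma exists_not_commutator_le_characterStabilizer {H V : Type*} [Group H] [CommGroup V] [Finite V]
    {φ : H →* MulAut V} (hφ : ¬ commutator H ≤ φ.ker) (k : Subfield ℂ)
    [HasEnoughRootsOfUnity k (Monoid.exponent V)] :
    ∃ l : V →* ℂˣ, (∀ v, (l v : ℂ) ∈ k) ∧ ¬ commutator H ≤ characterStabilizer φ l := by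
  obtain ⟨h, hh, hφh⟩ := SetLike.not_le_iff_exists.1 hφ
  obtain ⟨v, hv⟩ : ∃ v, φ h v ≠ v := by
    contrapose! hφh
    exact MulEquiv.ext hφh
  obtain ⟨l, hl⟩ := CommGroup.exists_apply_ne_one_of_hasEnoughRootsOfUnity V k
    (mt mul_inv_eq_one.1 hv)
  refine ⟨(Units.map (k.subtype : k →* ℂ)).comp l, fun v => (l v : k).2, fun hle => hl ?_⟩
  have := Units.map_injective k.subtype.injective (hle hh v)
  rw [map_mul, map_inv, this, mul_inv_cancel]

section SemidirectProduct

variable {H V : Type} [Group H] [Finite H]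

lemma ncard_linear_Irr_le [Group V] {φ : H →* MulAut V} (hφ : actionCommutator φ = ⊤)
    (k : Subfield ℂ) :
    {f ∈ {f ∈ Irr (V ⋊[φ] H) | ∀ g, f g ∈ k} | f 1 = 1}.ncard ≤ Nat.card (H →* kˣ) := by
  let inflate (ν : H →* kˣ) (g : V ⋊[φ] H) : ℂ := (ν g.right : k)
  have subset_range : {f ∈ {f ∈ Irr (V ⋊[φ] H) | ∀ g, f g ∈ k} | f 1 = 1} ⊆ Set.range inflate := by
    rintro f ⟨⟨hf, hfk⟩, hf1⟩
    obtain ⟨μ, hμ⟩ := exists_monoidHom_of_apply_one_eq_one hf hf1 hfk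
    refine ⟨μ.comp SemidirectProduct.inr, funext fun g => ?_⟩
    rw [hμ g, ← SemidirectProduct.inl_left_mul_inr_right g, map_mul, monoidHom_inl_eq_one hφ μ,
      one_mul]
    simp [inflate]
  calc _ ≤ (Set.range inflate).ncard := Set.ncard_le_ncard subset_range (Set.finite_range _)
    _ ≤ Nat.card (H →* kˣ) := by
        rw [← Set.image_univ, ← Set.ncard_univ]
        exact Set.ncard_image_le

lemma character_inducedRep_mem [Group V] [Finite V] {φ : H →* MulAut V} {k : Subfield ℂ}
    {l : V →* ℂˣ} (hlk : ∀ v, (l v : ℂ) ∈ k) (ψ : characterStabilizer φ l →* kˣ) :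
    (inducedRep φ l ((Units.map (k.subtype : k →* ℂ)).comp ψ)).character ∈
      {f ∈ Irr (V ⋊[φ] H) | ∀ g, f g ∈ k} := by
  have := Fintype.ofFinite H
  have : Finite (V ⋊[φ] H) := Finite.of_equiv _ SemidirectProduct.equivProd.symm
  have := inducedRep_isIrreducible l ((Units.map (k.subtype : k →* ℂ)).comp ψ)
  refine ⟨character_mem_Irr _, fun g => ?_⟩
  have extendByZero_mem (x : H) :
      (extendByZero ((Units.map (k.subtype : k →* ℂ)).comp ψ)).1 x ∈ k := by
    by_cases hx : x ∈ characterStabilizer φ l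
    · rw [extendByZero_of_mem _ hx]
      exact (ψ ⟨x, hx⟩ : k).2
    · rw [extendByZero_of_notMem _ hx]
      exact k.zero_mem
  rw [character_inducedRep]
  exact k.mul_mem (k.inv_mem (natCast_mem k _))
    (k.sum_mem fun x _ => k.mul_mem (hlk _) (extendByZero_mem _))

theorem two_le_acd_semidirectProduct [Group V] [Finite V] {φ : H →* MulAut V}
    {k : Subfield ℂ} (hφ : actionCommutator φ = ⊤) {l : V →* ℂˣ} (hlk : ∀ v, (l v : ℂ) ∈ k)
    (hl : ¬ commutator H ≤ characterStabilizer φ l) :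
    2 ≤ acd {f ∈ Irr (V ⋊[φ] H) | ∀ g, f g ∈ k} := by
  have : Finite (V ⋊[φ] H) := Finite.of_equiv _ SemidirectProduct.equivProd.symm
  let toComplex : kˣ →* ℂˣ := Units.map (k.subtype : k →* ℂ)
  have toComplex_injective : Function.Injective toComplex :=
    Units.map_injective k.subtype.injective
  let ind (ψ : characterStabilizer φ l →* kˣ) := (inducedRep φ l (toComplex.comp ψ)).character
  have ind_injective : Function.Injective ind :=
    (character_inducedRep_injective l).comp fun _ _ => (MonoidHom.cancel_left toComplex_injective).1
  refine two_le_acd (I := Set.range ind) (finite_Irr.subset fun f hf => hf.1)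
    ⟨ind 1, character_inducedRep_mem hlk 1⟩ (fun f hf => apply_one_eq_one_or_two_le hf.1)
    (Set.range_subset_iff.2 (character_inducedRep_mem hlk))
    (m := (characterStabilizer φ l ⊔ commutator H).index) ?_ ?_
  · rintro _ ⟨ψ, rfl⟩
    simp only [ind]
    rw [character_inducedRep_one, Complex.natCast_re]
    exact_mod_cast index_sup_commutator_add_two_le hl
  · rw [Set.ncard_range_of_injective ind_injective]
    exact (ncard_linear_Irr_le hφ k).trans (card_monoidHom_units_le_index_mul k _)

theorem nonabelian_semidirect_acd_ge_two_general [CommGroup V] [Finite V]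
    (φ : H →* MulAut V) (hcomm : ¬ commutator H ≤ φ.ker) (hφ : actionCommutator φ = ⊤)
    (k : Subfield ℂ) [HasEnoughRootsOfUnity k (Monoid.exponent V)] :
    2 ≤ acd {f ∈ Irr (V ⋊[φ] H) | ∀ g, f g ∈ k} := by
  obtain ⟨l, hlk, hl⟩ := exists_not_commutator_le_characterStabilizer hcomm k
  exact two_le_acd_semidirectProduct hφ hlk hl

end SemidirectProduct

theorem nonabelian_semidirect_acd_ge_two
    (p : ℕ) (hp : p.Prime)
    (H V : Type) [Group H] [Fintype H] (hnab : ∃ x y : H, x * y ≠ y * x)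
    [CommGroup V] [Fintype V] [Nontrivial V]
    (helem : ∀ v : V, v ^ p = 1)
    (φ : H →* MulAut V) (hfaith : Function.Injective φ)
    (hirr : ∀ W : Subgroup V, (∀ h : H, ∀ w ∈ W, φ h w ∈ W) → W = ⊥ ∨ W = ⊤)
    (k : Subfield ℂ) (hk : ∀ ζ : ℂ, IsPrimitiveRoot ζ p → ζ ∈ k) :
    2 ≤ acd {f ∈ Irr (V ⋊[φ] H) | ∀ g, f g ∈ k} := by
  have : NeZero p := ⟨hp.ne_zero⟩
  have := hasEnoughRootsOfUnity_exponent helem k hk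
  have hcomm := not_commutator_le_ker hnab hfaith
  exact nonabelian_semidirect_acd_ge_two_general φ hcomm
    (actionCommutator_eq_top_of_irreducible (by rintro rfl; simp at hcomm) hirr) k
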